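/- Let k ≥ 2 and let G be a finite simple graph with maximum degree at most 2 such that exactly one connected component of G is a path with at least k−1 vertices. If s(G, P_k) ≤ k, then no connected component of G is a cycle with more than k vertices, and the unique path component of G with at least k−1 vertices has exactly s(G, P_k) + k − 1 vertices. -/

import Mathlib

open SimpleGraph

/-- `SameDeck G G' k`: `G` and `G'` have the same `k`-deck, i.e. for every simple graph `H`
on `k` vertices, the number of `k`-element vertex subsets of `G` inducing a subgraph
isomorphic to `H` equals the corresponding number for `G'`. -/
def SameDeck {V W : Type*} [Fintype V] [Fintype W]
    (G : SimpleGraph V) (G' : SimpleGraph W) (k : ℕ) : Prop :=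
  ∀ H : SimpleGraph (Fin k),
    Set.ncard {s : Finset V | s.card = k ∧ Nonempty ((G.induce (↑s : Set V)) ≃g H)} =
    Set.ncard {s : Finset W | s.card = k ∧ Nonempty ((G'.induce (↑s : Set W)) ≃g H)}

/-- `copies G H = s(G,H)`, the number of vertex subsets of `G` whose induced subgraph is
isomorphic to `H`. -/
noncomputable def copies {V W : Type*} [Fintype V]
    (G : SimpleGraph V) (H : SimpleGraph W) : ℕ :=
  Set.ncard {s : Finset V | Nonempty ((G.induce (↑s : Set V)) ≃g H)}

/-- The connected component `c` of `G` is a path on `m` vertices. -/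
def CompIsPath {V : Type*} (G : SimpleGraph V) (c : G.ConnectedComponent) (m : ℕ) : Prop :=
  Nonempty ((G.induce c.supp) ≃g pathGraph m)

/-- The connected component `c` of `G` is a cycle on `m` vertices (`m ≥ 3`). -/
def CompIsCycle {V : Type*} (G : SimpleGraph V) (c : G.ConnectedComponent) (m : ℕ) : Prop :=
  3 ≤ m ∧ Nonempty ((G.induce c.supp) ≃g cycleGraph m)

/-- A linear forest: every connected component is a path. -/
def IsLinearForest {V : Type*} (G : SimpleGraph V) : Prop :=
  ∀ c : G.ConnectedComponent, ∃ m : ℕ, CompIsPath G c m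

def PN {V : Type*} (G : SimpleGraph V) (k : ℕ) (f : ℕ → V) : Prop :=
  (∀ i < k, ∀ j < k, f i = f j → i = j) ∧
  ∀ i < k, ∀ j < k, (G.Adj (f i) (f j) ↔ i + 1 = j ∨ j + 1 = i)

def CN {V : Type*} (G : SimpleGraph V) (k : ℕ) (f : ℕ → V) : Prop :=
  (∀ i < k, ∀ j < k, f i = f j → i = j) ∧
  ∀ i < k, ∀ j < k, (G.Adj (f i) (f j) ↔
    i + 1 = j ∨ j + 1 = i ∨ (i = 0 ∧ j + 1 = k) ∨ (j = 0 ∧ i + 1 = k))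

lemma path_iso_of_PN {V : Type*} (G : SimpleGraph V) (k : ℕ) (f : ℕ → V) (S : Set V)
    (h : PN G k f) (hS : S = f '' Set.Iio k) :
    Nonempty ((G.induce S) ≃g pathGraph k) := by
  subst hS
  let φ : Fin k → (f '' Set.Iio k : Set V) := fun i => ⟨f i, i, i.2, rfl⟩
  have hφ : Function.Bijective φ := by
    constructor
    · intro a b hab
      exact Fin.ext (h.1 a a.2 b b.2 (congrArg Subtype.val hab))
    · rintro ⟨_, i, hi, rfl⟩
      exact ⟨⟨i, hi⟩, rfl⟩
  refine ⟨RelIso.symm ⟨Equiv.ofBijective φ hφ, ?_⟩⟩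
  intro a b
  simp only [Equiv.ofBijective_apply, comap_adj, pathGraph_adj, φ, Function.Embedding.subtype_apply]
  exact h.2 a a.2 b b.2

lemma PN_of_path_iso {V : Type*} (G : SimpleGraph V) (k : ℕ) (hk : 0 < k) (S : Set V)
    (h : Nonempty ((G.induce S) ≃g pathGraph k)) :
    ∃ f, PN G k f ∧ S = f '' Set.Iio k := by
  obtain ⟨e⟩ := h
  let f : ℕ → V := fun i => if h : i < k then (e.symm ⟨i, h⟩ : V) else (e.symm ⟨0, hk⟩ : V)
  have hf : ∀ i (h : i < k), f i = (e.symm ⟨i, h⟩ : V) := fun i h => by simp [f, h]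
  refine ⟨f, ⟨?_, ?_⟩, ?_⟩
  · intro i hi j hj hij
    rw [hf i hi, hf j hj] at hij
    simpa using e.symm.injective (Subtype.ext hij)
  · intro i hi j hj
    rw [hf i hi, hf j hj]
    have := e.symm.map_adj_iff (v := ⟨i, hi⟩) (w := ⟨j, hj⟩)
    simp only [comap_adj, pathGraph_adj, Function.Embedding.subtype_apply] at this
    exact this
  · ext x
    constructor
    · intro hx
      refine ⟨(e ⟨x, hx⟩).1, (e ⟨x, hx⟩).2, ?_⟩
      rw [hf _ (e ⟨x, hx⟩).2]
      simp
    · rintro ⟨i, hi, rfl⟩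
      rw [hf i hi]
      exact (e.symm ⟨i, hi⟩).2

lemma CN_of_cycle_iso {V : Type*} (G : SimpleGraph V) (k : ℕ) (hk : 3 ≤ k) (S : Set V)
    (h : Nonempty ((G.induce S) ≃g cycleGraph k)) :
    ∃ f, CN G k f := by
  obtain ⟨e⟩ := h
  have hk0 : 0 < k := by omega
  let f : ℕ → V := fun i => if h : i < k then (e.symm ⟨i, h⟩ : V) else (e.symm ⟨0, hk0⟩ : V)
  have hf : ∀ i (h : i < k), f i = (e.symm ⟨i, h⟩ : V) := fun i h => by simp [f, h]
  refine ⟨f, ?_, ?_⟩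
  · intro i hi j hj hij
    rw [hf i hi, hf j hj] at hij
    simpa using e.symm.injective (Subtype.ext hij)
  · intro i hi j hj
    rw [hf i hi, hf j hj]
    have := e.symm.map_adj_iff (v := ⟨i, hi⟩) (w := ⟨j, hj⟩)
    simp only [comap_adj, Function.Embedding.subtype_apply] at this
    rw [this, cycleGraph_adj', Fin.sub_def, Fin.sub_def]
    dsimp only
    have key : ∀ a < k, ∀ b < k, ((k - b + a) % k = 1 ↔ b + 1 = a ∨ (a = 0 ∧ b + 1 = k)) := by
      intro a ha b hb
      by_cases hab : b ≤ a
      · have : (k - b + a) % k = a - b := by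
          rw [show k - b + a = (a - b) + k by omega, Nat.add_mod_right, Nat.mod_eq_of_lt (by omega)]
        omega
      · rw [Nat.mod_eq_of_lt (by omega)]; omega
    rw [key i hi j hj, key j hj i hi]
    omega

lemma cycle_copies {V : Type*} [Fintype V] (G : SimpleGraph V) (k m : ℕ) (hk : 2 ≤ k)
    (hkm : k < m) (f : ℕ → V) (h : CN G m f) : k < copies G (pathGraph k) := by
  classical
  let g : ℕ → V := fun x => if x < m then f x else f (x - m)
  have gi : ∀ i < m, ∀ a < m, ∀ b < m, g (i + a) = g (i + b) → a = b := by
    intro i hi a ha b hb hab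
    simp only [g] at hab
    split_ifs at hab <;> have := h.1 _ (by omega) _ (by omega) hab <;> omega
  have gp : ∀ i < m, PN G k (fun a => g (i + a)) := by
    intro i hi
    refine ⟨fun a ha b hb => gi i hi a (by omega) b (by omega), ?_⟩
    intro a ha b hb
    simp only [g]
    split_ifs <;> rw [h.2 _ (by omega) _ (by omega)] <;> omega
  let w : ℕ → Finset V := fun i => (Finset.range k).image (fun a => g (i + a))
  have hw : ∀ i, (w i : Set V) = (fun a => g (i + a)) '' Set.Iio k := by
    intro i; simp [w]
  have hinj : Set.InjOn w (Finset.range m : Set ℕ) := by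
    intro i hi j hj hij
    simp only [Finset.coe_range, Set.mem_Iio] at hi hj
    have h1 : g i ∈ w j := by
      rw [← hij]; simp only [w, Finset.mem_image, Finset.mem_range]; exact ⟨0, by omega, rfl⟩
    have h2 : g (i + (m - 1)) ∉ w j := by
      rw [← hij]; simp only [w, Finset.mem_image, Finset.mem_range, not_exists, not_and]
      intro a ha he
      have := gi i hi a (by omega) (m - 1) (by omega) he
      omega
    simp only [w, Finset.mem_image, Finset.mem_range] at h1 h2
    obtain ⟨a, ha, he⟩ := h1
    by_contra hne
    apply h2
    rcases Nat.eq_zero_or_pos a with rfl | hpos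
    · exfalso
      simp only [g] at he
      split_ifs at he <;> have := h.1 _ (by omega) _ (by omega) he <;> omega
    · refine ⟨a - 1, by omega, ?_⟩
      have : (j + a) = i ∨ j + a = i + m := by
        simp only [g] at he
        split_ifs at he <;> have := h.1 _ (by omega) _ (by omega) he <;> omega
      simp only [g]
      split_ifs <;> congr 1 <;> omega
  have hsub : w '' (Finset.range m : Set ℕ) ⊆
      {s : Finset V | Nonempty ((G.induce (↑s : Set V)) ≃g pathGraph k)} := by
    rintro _ ⟨i, hi, rfl⟩
    exact path_iso_of_PN G k _ _ (gp i (by simpa using hi)) (hw i)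
  have := Set.ncard_le_ncard hsub (Set.toFinite _)
  rw [hinj.ncard_image, Set.ncard_coe_finset, Finset.card_range] at this
  unfold copies
  omega

lemma deg3 {V : Type*} [Fintype V] (G : SimpleGraph V)
    (hdeg : ∀ v, (G.neighborSet v).ncard ≤ 2) {v a b c : V} (ha : G.Adj v a) (hb : G.Adj v b)
    (hc : G.Adj v c) (hab : a ≠ b) : c = a ∨ c = b := by
  classical
  by_contra hcon
  push Not at hcon
  have hsub : (({a, b, c} : Finset V) : Set V) ⊆ G.neighborSet v := by
    intro x hx
    simp at hx
    rcases hx with rfl | rfl | rfl <;> assumption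
  have := Set.ncard_le_ncard hsub (Set.toFinite _)
  rw [Set.ncard_coe_finset, Finset.card_eq_three.2 ⟨a, b, c, hab, hcon.1.symm, hcon.2.symm, rfl⟩] at this
  have := hdeg v
  omega

lemma closed_supp {V : Type*} (G : SimpleGraph V) (d : G.ConnectedComponent) (S : Set V)
    (x : V) (hx : x ∈ S) (hxd : x ∈ d.supp) (hS : ∀ a ∈ S, ∀ b, G.Adj a b → b ∈ S) :
    d.supp ⊆ S := by
  intro y hy
  have hr : G.Reachable x y := by
    rw [ConnectedComponent.mem_supp_iff] at hxd hy
    exact ConnectedComponent.exact (hxd.trans hy.symm)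
  obtain ⟨p⟩ := hr
  clear hxd hy
  induction p with
  | nil => exact hx
  | cons h p ih => exact ih (hS _ hx _ h)

lemma classify {V : Type*} [Fintype V] (G : SimpleGraph V)
    (hdeg : ∀ v, (G.neighborSet v).ncard ≤ 2) (d : G.ConnectedComponent) :
    ∃ m f, d.supp = f '' Set.Iio m ∧ (PN G m f ∨ (3 ≤ m ∧ CN G m f)) := by
  classical
  let Q : ℕ → Prop := fun m => ∃ f : ℕ → V, (∀ i < m, ∀ j < m, f i = f j → i = j) ∧
    (∀ i, i + 1 < m → G.Adj (f i) (f (i + 1))) ∧ ∀ i < m, f i ∈ d.supp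
  have hQb : ∀ m, Q m → m ≤ Fintype.card V := by
    rintro m ⟨f, hf, -, -⟩
    have := Fintype.card_le_of_injective (fun i : Fin m => f i)
      (fun a b hab => Fin.ext (hf a a.2 b b.2 hab))
    simpa using this
  have hQ1 : Q 1 := by
    obtain ⟨v, hv⟩ := d.nonempty_supp
    exact ⟨fun _ => v, by intros; omega, by intros; omega, fun _ _ => hv⟩
  obtain ⟨m, hm, hmax⟩ : ∃ m, Q m ∧ ∀ n, Q n → n ≤ m :=
    ⟨Nat.findGreatest Q (Fintype.card V), Nat.findGreatest_spec (hQb 1 hQ1) hQ1,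
      fun n hn => Nat.le_findGreatest (hQb n hn) hn⟩
  have hm1 := hmax 1 hQ1
  obtain ⟨f, hi, ha, hs⟩ := hm
  have adjs : ∀ a b, a ∈ d.supp → G.Adj a b → b ∈ d.supp := by
    intro a b h1 h2
    rw [ConnectedComponent.mem_supp_iff] at h1 ⊢
    rw [← h1]
    exact (ConnectedComponent.sound h2.reachable).symm
  have hend : ∀ w, G.Adj (f (m - 1)) w → ∃ i < m, f i = w := by
    intro w hw
    by_contra hcon
    push Not at hcon
    have : Q (m + 1) := by
      refine ⟨fun i => if i < m then f i else w, ?_, ?_, ?_⟩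
      · intro i h1 j h2
        dsimp only
        split_ifs with h3 h4 h4
        · exact hi i h3 j h4
        · intro h; exact absurd h (hcon i h3)
        · intro h; exact absurd h.symm (hcon j h4)
        · intros; omega
      · intro i h1
        dsimp only
        rw [if_pos (by omega)]
        split_ifs with h3
        · exact ha i h3
        · rwa [show i = m - 1 by omega]
      · intro i h1
        dsimp only
        split_ifs with h3
        · exact hs i h3
        · exact adjs _ _ (hs (m - 1) (by omega)) hw
    have := hmax _ this
    omega
  have hstart : ∀ w, G.Adj (f 0) w → ∃ i < m, f i = w := by
    intro w hw
    by_contra hcon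
    push Not at hcon
    have : Q (m + 1) := by
      refine ⟨fun i => if i = 0 then w else f (i - 1), ?_, ?_, ?_⟩
      · intro i h1 j h2
        dsimp only
        split_ifs with h3 h4 h4
        · intros; omega
        · intro h; exact absurd h.symm (hcon _ (by omega))
        · intro h; exact absurd h (hcon _ (by omega))
        · intro h
          have := hi _ (by omega) _ (by omega) h
          omega
      · intro i h1
        dsimp only
        rw [if_neg (by omega : ¬ (i + 1 = 0))]
        split_ifs with h3
        · subst h3; exact hw.symm
        · have := ha (i - 1) (by omega)
          rwa [show i - 1 + 1 = i + 1 - 1 by omega] at this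
      · intro i h1
        dsimp only
        split_ifs with h3
        · exact adjs _ _ (hs 0 (by omega)) hw
        · exact hs _ (by omega)
    have := hmax _ this
    omega
  have hmid : ∀ i, 0 < i → i + 1 < m → ∀ w, G.Adj (f i) w → w = f (i - 1) ∨ w = f (i + 1) := by
    intro i h0 h1 w hw
    have h2 := ha (i - 1) (by omega)
    rw [show i - 1 + 1 = i by omega] at h2
    refine deg3 G hdeg h2.symm (ha i h1) hw ?_
    intro h
    have := hi _ (by omega) _ (by omega) h
    omega
  have hclosed : ∀ a ∈ f '' Set.Iio m, ∀ b, G.Adj a b → b ∈ f '' Set.Iio m := by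
    rintro _ ⟨i, him, rfl⟩ b hb
    simp only [Set.mem_Iio] at him
    rcases Nat.eq_zero_or_pos i with rfl | h0
    · obtain ⟨j, h1, h2⟩ := hstart b hb
      exact ⟨j, h1, h2⟩
    · by_cases h1 : i + 1 < m
      · rcases hmid i h0 h1 b hb with rfl | rfl
        · exact ⟨i - 1, by simp only [Set.mem_Iio]; omega, rfl⟩
        · exact ⟨i + 1, h1, rfl⟩
      · rw [show i = m - 1 by omega] at hb
        obtain ⟨j, h1, h2⟩ := hend b hb
        exact ⟨j, h1, h2⟩
  have hsupp : d.supp = f '' Set.Iio m := by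
    apply Set.Subset.antisymm
    · exact closed_supp G d _ (f 0) ⟨0, by simp only [Set.mem_Iio]; omega, rfl⟩ (hs 0 (by omega)) hclosed
    · rintro _ ⟨i, him, rfl⟩
      exact hs i him
  have hlt : ∀ i j, i < j → j < m → G.Adj (f i) (f j) → i + 1 = j ∨ (i = 0 ∧ j + 1 = m) := by
    intro i j hij hj hadj
    by_contra hcon
    push Not at hcon
    rcases Nat.eq_zero_or_pos i with rfl | h0
    · have := hcon.2 rfl
      rcases hmid j (by omega) (by omega) _ hadj.symm with h | h <;>
        have := hi _ (by omega) _ (by omega) h <;> omega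
    · rcases hmid i (by omega) (by omega) _ hadj with h | h <;>
        have := hi _ (by omega) _ (by omega) h <;> omega
  refine ⟨m, f, hsupp, ?_⟩
  by_cases hc : 3 ≤ m ∧ G.Adj (f 0) (f (m - 1))
  · right
    refine ⟨hc.1, hi, ?_⟩
    intro i h1 j h2
    constructor
    · intro h
      rcases lt_trichotomy i j with h3 | rfl | h3
      · have := hlt i j h3 h2 h; omega
      · exact absurd h (G.irrefl)
      · have := hlt j i h3 h1 h.symm; omega
    · rintro (rfl | rfl | ⟨rfl, h⟩ | ⟨rfl, h⟩)
      · exact ha _ h2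
      · exact (ha _ h1).symm
      · rw [show j = m - 1 by omega]; exact hc.2
      · rw [show i = m - 1 by omega]; exact hc.2.symm
  · left
    have hc' : ∀ j, j + 1 = m → G.Adj (f 0) (f j) → j = 1 := by
      intro j hj h
      by_contra hne
      rcases Nat.eq_zero_or_pos j with rfl | h0
      · exact G.irrefl h
      · exact hc ⟨by omega, by rwa [show m - 1 = j by omega]⟩
    refine ⟨hi, ?_⟩
    intro i h1 j h2
    constructor
    · intro h
      rcases lt_trichotomy i j with h3 | rfl | h3
      · rcases hlt i j h3 h2 h with h4 | ⟨rfl, h4⟩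
        · exact Or.inl h4
        · have := hc' j h4 h; omega
      · exact absurd h (G.irrefl)
      · rcases hlt j i h3 h1 h.symm with h4 | ⟨rfl, h4⟩
        · exact Or.inr h4
        · have := hc' i h4 h.symm; omega
    · rintro (rfl | rfl)
      · exact ha _ h2
      · exact (ha _ h1).symm

lemma mono_dir (g : ℕ → ℕ) (k : ℕ) (hi : ∀ i < k, ∀ j < k, g i = g j → i = j)
    (ha : ∀ i, i + 1 < k → g i + 1 = g (i + 1) ∨ g (i + 1) + 1 = g i) :
    (∀ i < k, g i = g 0 + i) ∨ (∀ i < k, g i + i = g 0) := by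
  induction k with
  | zero => left; intros; omega
  | succ k ih =>
    have ih' := ih (fun i h j h' => hi i (by omega) j (by omega)) (fun i h => ha i (by omega))
    rcases Nat.lt_or_ge k 2 with h2 | h2
    · obtain rfl | rfl : k = 0 ∨ k = 1 := by omega
      · left; intro i h; rw [show i = 0 by omega]; omega
      · have h01 := ha 0 (by omega)
        rw [Nat.zero_add] at h01
        rcases h01 with h | h
        · left; intro i h5; obtain rfl | rfl : i = 0 ∨ i = 1 := by omega
          · rfl
          · omega
        · right; intro i h5; obtain rfl | rfl : i = 0 ∨ i = 1 := by omega
          · rfl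
          · omega
    · have h3 := ha (k - 1) (by omega)
      rw [show k - 1 + 1 = k by omega] at h3
      have h4 : g k ≠ g (k - 2) := fun h => by
        have := hi _ (by omega) _ (by omega) h; omega
      rcases ih' with h | h
      · left
        intro i hik
        have e1 := h (k - 1) (by omega)
        have e2 := h (k - 2) (by omega)
        rcases Nat.lt_or_ge i k with h5 | h5
        · exact h i h5
        · rw [show i = k by omega]; omega
      · right
        intro i hik
        have e1 := h (k - 1) (by omega)
        have e2 := h (k - 2) (by omega)
        rcases Nat.lt_or_ge i k with h5 | h5
        · exact h i h5
        · rw [show i = k by omega]; omega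

lemma ncard_img {V : Type*} (m : ℕ) (f : ℕ → V)
    (h : ∀ i < m, ∀ j < m, f i = f j → i = j) : (f '' Set.Iio m).ncard = m := by
  have hinj : Set.InjOn f (Set.Iio m) := fun i hi j hj => h i hi j hj
  rw [hinj.ncard_image]
  rw [← Finset.coe_range, Set.ncard_coe_finset, Finset.card_range]

lemma path_supp {V : Type*} (G : SimpleGraph V) (k : ℕ) (g : ℕ → V) (hg : PN G k g)
    (d : G.ConnectedComponent) (h0 : g 0 ∈ d.supp) : ∀ i < k, g i ∈ d.supp := by
  intro i
  induction i with
  | zero => intro _; exact h0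
  | succ i ih =>
    intro h
    have h1 := ih (by omega)
    rw [ConnectedComponent.mem_supp_iff] at h1 ⊢
    rw [← h1]
    exact (ConnectedComponent.sound ((hg.2 i (by omega) (i+1) h).2 (Or.inl rfl)).reachable).symm

/-- Let `k ≥ 2` and let `G` have maximum degree at most 2 and exactly one
component that is a path with at least `k-1` vertices. If `s(G,P_k) ≤ k`, then no
component of `G` is a cycle with more than `k` vertices, and the unique path component
with at least `k-1` vertices has exactly `s(G,P_k) + k - 1` vertices. -/
theorem stmt_18 {V : Type*} [Fintype V] (G : SimpleGraph V) (k : ℕ) (hk : 2 ≤ k)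
    (hdeg : ∀ v, (G.neighborSet v).ncard ≤ 2)
    (huniq : ∃! c : G.ConnectedComponent, ∃ m, k - 1 ≤ m ∧ CompIsPath G c m)
    (hle : copies G (pathGraph k) ≤ k) :
    (∀ (c : G.ConnectedComponent) (m : ℕ), k < m → ¬ CompIsCycle G c m) ∧
    (∀ c : G.ConnectedComponent, (∃ m, k - 1 ≤ m ∧ CompIsPath G c m) →
      c.supp.ncard = copies G (pathGraph k) + k - 1) := by
  classical
  have part1 : ∀ m f, k < m → ¬ CN G m f := fun m f hm h => by
    have := cycle_copies G k m hk hm f h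
    omega
  refine ⟨?_, ?_⟩
  · rintro c m hm ⟨h3, hc⟩
    obtain ⟨f, hf⟩ := CN_of_cycle_iso G m h3 _ hc
    exact part1 m f hm hf
  intro c hc
  have huc : ∀ d : G.ConnectedComponent, (∃ m, k - 1 ≤ m ∧ CompIsPath G d m) → d = c := by
    intro d hd
    exact huniq.unique hd hc
  obtain ⟨m, hm, hp⟩ := hc
  obtain ⟨f, hf, hsupp⟩ := PN_of_path_iso G m (by omega) _ hp
  have hcard : c.supp.ncard = m := by rw [hsupp]; exact ncard_img m f hf.1
  let w : ℕ → Finset V := fun i => (Finset.range k).image (fun a => f (i + a))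
  have hw : ∀ i, (w i : Set V) = (fun a => f (i + a)) '' Set.Iio k := by
    intro i; simp [w]
  have hinj : Set.InjOn w (Finset.range (m + 1 - k) : Set ℕ) := by
    have key : ∀ i j, i < m + 1 - k → j < m + 1 - k → w i = w j → j ≤ i := by
      intro i j hi hj hij
      have h1 : f (i + 0) ∈ w j := by
        rw [← hij]; simp only [w, Finset.mem_image, Finset.mem_range]; exact ⟨0, by omega, rfl⟩
      simp only [w, Finset.mem_image, Finset.mem_range] at h1
      obtain ⟨a, ha, he⟩ := h1
      have := hf.1 _ (by omega) _ (by omega) he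
      omega
    intro i hi j hj hij
    simp only [Finset.coe_range, Set.mem_Iio] at hi hj
    exact le_antisymm (key j i hj hi hij.symm) (key i j hi hj hij)
  have hset : {s : Finset V | Nonempty ((G.induce (↑s : Set V)) ≃g pathGraph k)} =
      w '' (Finset.range (m + 1 - k) : Set ℕ) := by
    apply Set.Subset.antisymm
    · intro s hs
      obtain ⟨g, hg, hsg⟩ := PN_of_path_iso G k (by omega) _ hs
      have hd := path_supp G k g hg (G.connectedComponentMk (g 0)) rfl
      generalize hdd : G.connectedComponentMk (g 0) = d at hd
      have hdc : d = c := by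
        obtain ⟨n, f', hs', hn⟩ := classify G hdeg d
        have hsub : g '' Set.Iio k ⊆ d.supp := by
          rintro _ ⟨i, hi, rfl⟩; exact hd i hi
        have hle' := Set.ncard_le_ncard hsub (Set.toFinite _)
        rw [ncard_img k g hg.1] at hle'
        rcases hn with hn | ⟨h3, hn⟩
        · rw [hs', ncard_img n f' hn.1] at hle'
          exact huc d ⟨n, by omega, path_iso_of_PN G n f' _ hn hs'⟩
        · exfalso
          have hdn : d.supp.ncard = n := by rw [hs', ncard_img n f' hn.1]
          rw [hdn] at hle'
          have hkn : k = n := by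
            by_contra hne
            exact part1 n f' (by omega) hn
          have heq : g '' Set.Iio k = d.supp := by
            apply Set.eq_of_subset_of_ncard_le hsub _ (Set.toFinite _)
            rw [hdn, ncard_img k g hg.1]; omega
          have h0 := hd 0 (by omega)
          rw [hs'] at h0
          obtain ⟨x, hx, hx0⟩ := h0
          simp only [Set.mem_Iio] at hx
          have nb : ∀ y < n, G.Adj (f' x) (f' y) → f' y = g 1 := by
            intro y hy hadj
            have : f' y ∈ g '' Set.Iio k := by rw [heq, hs']; exact ⟨y, hy, rfl⟩
            obtain ⟨a, ha, hay⟩ := this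
            simp only [Set.mem_Iio] at ha
            rw [hx0, ← hay, hg.2 0 (by omega) a ha] at hadj
            rw [← hay, show a = 1 by omega]
          obtain ⟨y, z, hy, hz, hyz, hay, haz⟩ : ∃ y z, y < n ∧ z < n ∧ y ≠ z ∧
              G.Adj (f' x) (f' y) ∧ G.Adj (f' x) (f' z) := by
            refine ⟨if x = 0 then n - 1 else x - 1, if x + 1 = n then 0 else x + 1, ?_, ?_, ?_, ?_, ?_⟩
            · split_ifs <;> omega
            · split_ifs <;> omega
            · split_ifs <;> omega
            · rw [hn.2 x hx _ (by split_ifs <;> omega)]; split_ifs <;> omega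
            · rw [hn.2 x hx _ (by split_ifs <;> omega)]; split_ifs <;> omega
          exact hyz (hn.1 y hy z hz ((nb y hy hay).trans (nb z hz haz).symm))
      subst hdc
      have : ∀ i, ∃ j, i < k → j < m ∧ f j = g i := by
        intro i
        by_cases hi : i < k
        · have := hd i hi
          rw [hsupp] at this
          obtain ⟨j, h1, h2⟩ := this
          exact ⟨j, fun _ => ⟨h1, h2⟩⟩
        · exact ⟨0, fun h => absurd h hi⟩
      choose t ht using this
      have hdir := mono_dir t k (by
        intro i hi j hj hij
        apply hg.1 i hi j hj
        rw [← (ht i hi).2, ← (ht j hj).2, hij]) (by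
        intro i hi
        have := (hg.2 i (by omega) (i+1) hi).2 (Or.inl rfl)
        rw [← (ht i (by omega)).2, ← (ht (i+1) hi).2,
          hf.2 _ (ht i (by omega)).1 _ (ht (i+1) hi).1] at this
        exact this)
      rcases hdir with h | h
      · refine ⟨t 0, ?_, ?_⟩
        · have := h (k - 1) (by omega)
          have := (ht (k - 1) (by omega)).1
          simp only [Finset.coe_range, Set.mem_Iio]
          omega
        · apply Finset.coe_injective
          rw [hw, hsg]
          apply Set.image_congr
          intro i hi
          rw [← (ht i hi).2, h i hi]
      · have hk1 := h (k - 1) (by omega)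
        refine ⟨t (k - 1), ?_, ?_⟩
        · have := (ht 0 (by omega)).1
          simp only [Finset.coe_range, Set.mem_Iio]
          omega
        · apply Finset.coe_injective
          rw [hw, hsg]
          ext x
          constructor
          · rintro ⟨i, hi, rfl⟩
            simp only [Set.mem_Iio] at hi
            refine ⟨k - 1 - i, by simp only [Set.mem_Iio]; omega, ?_⟩
            dsimp only
            have := h (k - 1 - i) (by omega)
            rw [← (ht _ (by omega : k - 1 - i < k)).2]
            congr 1; omega
          · rintro ⟨i, hi, rfl⟩
            simp only [Set.mem_Iio] at hi
            refine ⟨k - 1 - i, by simp only [Set.mem_Iio]; omega, ?_⟩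
            dsimp only
            have := h i hi
            rw [← (ht i hi).2]
            congr 1; omega
    · rintro _ ⟨i, hi, rfl⟩
      simp only [Finset.coe_range, Set.mem_Iio] at hi
      refine path_iso_of_PN G k _ _ ⟨?_, ?_⟩ (hw i)
      · intro a ha b hb hab
        have := hf.1 _ (by omega) _ (by omega) hab
        omega
      · intro a ha b hb
        rw [hf.2 _ (by omega) _ (by omega)]
        omega
  have hcop : copies G (pathGraph k) = m + 1 - k := by
    unfold copies
    rw [hset, hinj.ncard_image, Set.ncard_coe_finset, Finset.card_range]
  rw [hcard, hcop]
  omega
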